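/- Let Σ and O be nominal Sb-sets with dim(Σ) ≤ 1. Restriction to separated words gives a one-to-one correspondence between Sb-equivariant functions L̄ : Σ* → O and Perm-equivariant functions S : (UΣ)^(∗) → U(O). Moreover, the inverse is given explicitly as follows: for w = a₁…aₙ ∈ Σ*, choose b₁, …, bₙ ∈ Σ pairwise separated and each separated from w, and let m ∈ Sb map each atom in supp(bᵢ) to the corresponding atom of supp(aᵢ) (i.e., m(a) = aᵢ's atom if a is bᵢ's atom, and m(a) = a otherwise); then S̄(a₁…aₙ) = m · S(b₁…bₙ). -/

import Mathlib

/-!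
The heart of the matter is that `m • S bs` depends only on the word `m • bs`, for every
`Perm`-equivariant `S`, separated word `bs` and substitution `m` (`smul_eq_of_smul_eq`).
Since moreover every word is of the form `m • bs` with `bs` separated (`exists_sepW_smul_eq`),
an `Sb`-equivariant language is determined by its restriction, and `L (m • bs) := m • S bs`
is a well-defined `Sb`-equivariant extension of `S`. The inverse formula is then just
equivariance.

Suppose `m • bs = m' • bs'`. A letter of dimension at most one is either fixed by all
substitutions or has a unique supporting atom, and substitutions preserve which of the two cases
holds. As the letters of a separated word have distinct atoms, a finite permutation `g` sends the
atoms of `bs` to those of `bs'`; because substitutions act on a single letter as permutations do,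
`g • bs = bs'`, and `m` agrees with `m' ∘ g` on the atoms of `bs`. These atoms form a
`Perm`-support of `S bs` by equivariance, hence an `Sb`-support: in a nominal `Sb`-set every finite
`Perm`-support is an `Sb`-support (`Supports.inter`). So `m • S bs = m' • g • S bs = m' • S bs'`.
-/

/-- The monoid of finitely-supported substitutions of atoms (`𝔸 = ℕ`). -/
def Sb : Submonoid (Function.End ℕ) where
  carrier := {m | {a | m a ≠ a}.Finite}
  one_mem' := by
    have h : {a : ℕ | (1 : Function.End ℕ) a ≠ a} = ∅ := by
      ext a
      simp only [Set.mem_setOf_eq, Set.mem_empty_iff_false, iff_false, not_not]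
      rfl
    simp [Set.mem_setOf_eq, h]
  mul_mem' := by
    intro m n hm hn
    refine Set.Finite.subset (Set.Finite.union hm hn) ?_
    intro a ha
    simp only [Set.mem_setOf_eq, Set.mem_union]
    by_contra hcon
    push_neg at hcon
    apply ha
    show m (n a) = a
    rw [hcon.2, hcon.1]

/-- The group (here: submonoid) of finitely-supported permutations of atoms. -/
def Pm : Submonoid (Function.End ℕ) where
  carrier := {m | {a | m a ≠ a}.Finite ∧ Function.Bijective m}
  one_mem' := ⟨Sb.one_mem, Function.bijective_id⟩
  mul_mem' := by
    intro m n hm hn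
    exact ⟨Sb.mul_mem hm.1 hn.1, Function.Bijective.comp hm.2 hn.2⟩

theorem Pm_le_Sb : Pm ≤ Sb := fun _ hm => hm.1

/-- The inclusion of the permutations into the substitutions. -/
def incl : Pm →* Sb := Submonoid.inclusion Pm_le_Sb

/-- `C` is an `M`-support of `x`. -/
def Supports (M : Submonoid (Function.End ℕ)) {X : Type*} [MulAction M X]
    (C : Set ℕ) (x : X) : Prop :=
  ∀ m₁ m₂ : M, (∀ a ∈ C, m₁.1 a = m₂.1 a) → m₁ • x = m₂ • x

/-- `X` is a nominal `M`-set: every element has a finite `M`-support. -/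
def IsNominal (M : Submonoid (Function.End ℕ)) (X : Type*) [MulAction M X] : Prop :=
  ∀ x : X, ∃ C : Set ℕ, C.Finite ∧ Supports M C x

/-- The `Perm`-action on an `Sb`-set, obtained by restriction. -/
instance (priority := 100) permActionOfSb {X : Type*} [MulAction Sb X] : MulAction Pm X :=
  MulAction.compHom X incl

theorem Supports.perm_smul {X : Type*} [MulAction Pm X] {C : Set ℕ} {x : X}
    (h : Supports Pm C x) (g : Pm) : Supports Pm (g.1 '' C) (g • x) := by
  intro m₁ m₂ hag
  have h' : (m₁ * g) • x = (m₂ * g) • x :=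
    h (m₁ * g) (m₂ * g) (fun a ha => hag (g.1 a) ⟨a, ha, rfl⟩)
  simpa [mul_smul] using h'

/-- Two elements (of possibly different nominal `Perm`-sets) are separated if they
have disjoint finite supports. -/
def Separated {X Y : Type*} [MulAction Pm X] [MulAction Pm Y] (x : X) (y : Y) : Prop :=
  ∃ C D : Set ℕ, C.Finite ∧ D.Finite ∧ Supports Pm C x ∧ Supports Pm D y ∧ Disjoint C D

theorem Separated.perm_smul {X Y : Type*} [MulAction Pm X] [MulAction Pm Y]
    {x : X} {y : Y} (h : Separated x y) (g : Pm) : Separated (g • x) (g • y) := by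
  obtain ⟨C, D, hC, hD, hsx, hsy, hdis⟩ := h
  exact ⟨g.1 '' C, g.1 '' D, hC.image _, hD.image _, hsx.perm_smul g, hsy.perm_smul g,
    (Set.disjoint_image_iff g.2.2.injective).2 hdis⟩

/-- The separated product `X ∗ Y`. -/
def SepProd (X Y : Type*) [MulAction Pm X] [MulAction Pm Y] : Type _ :=
  {p : X × Y // Separated p.1 p.2}

instance SepProd.instMulAction (X Y : Type*) [MulAction Pm X] [MulAction Pm Y] :
    MulAction Pm (SepProd X Y) where
  smul g p := ⟨g • p.1, by
    have := p.2.perm_smul g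
    exact this⟩
  one_smul p := Subtype.ext (one_smul _ _)
  mul_smul g h p := Subtype.ext (mul_smul g h p.1)

/-- The letterwise action on words. -/
instance List.instMulActionOfSubstitutions {M : Submonoid (Function.End ℕ)} {X : Type*}
    [MulAction M X] : MulAction M (List X) where
  smul m l := l.map (m • ·)
  one_smul l := by
    show l.map _ = l
    simp
  mul_smul m n l := by
    show l.map _ = (l.map _).map _
    simp [mul_smul]

theorem List.smul_def {M : Submonoid (Function.End ℕ)} {X : Type*} [MulAction M X]
    (m : M) (l : List X) : m • l = l.map (m • ·) := rfl

/-- Separated words over `X`: words whose letters are pairwise separated. -/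
def SepW (X : Type*) [MulAction Pm X] : Type _ := {l : List X // l.Pairwise Separated}

instance SepW.instMulAction (X : Type*) [MulAction Pm X] : MulAction Pm (SepW X) where
  smul g l := ⟨g • l.1, by
    rw [List.smul_def]
    exact List.Pairwise.map _ (fun {x y} h => h.perm_smul g) l.2⟩
  one_smul l := Subtype.ext (one_smul _ _)
  mul_smul g h l := Subtype.ext (mul_smul g h l.1)
/-- `M`-equivariance of a function between `M`-sets. -/
def Equivariant (M : Submonoid (Function.End ℕ)) {X Y : Type*} [MulAction M X]
    [MulAction M Y] (f : X → Y) : Prop :=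
  ∀ (m : M) (x : X), f (m • x) = m • f x

/-- The substitution acting as `f` on the finite set `F` and as the identity elsewhere. -/
def Sb.ofFinset (F : Finset ℕ) (f : ℕ → ℕ) : Sb :=
  ⟨fun a => if a ∈ F then f a else a, by
    refine F.finite_toSet.subset fun a ha => ?_
    by_contra h
    exact ha (if_neg h)⟩

theorem Sb.ofFinset_apply (F : Finset ℕ) (f : ℕ → ℕ) (a : ℕ) :
    (Sb.ofFinset F f).1 a = if a ∈ F then f a else a := rfl

/-- A finite partial injection on atoms extends to a finite permutation. -/
theorem exists_perm_extending {ι : Type*} [Finite ι] (p q : ι → ℕ)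
    (hp : Function.Injective p) (hq : Function.Injective q) :
    ∃ g : Pm, ∀ j, g.1 (p j) = q j := by
  classical
  have := Fintype.ofFinite ι
  let T : Finset ℕ := Finset.univ.image p ∪ Finset.univ.image q
  have hpT : ∀ j, p j ∈ T := fun j => by simp [T]
  have hqT : ∀ j, q j ∈ T := fun j => by simp [T]
  let f : T → ℕ := fun a => Function.extend p q id a
  have hf : ∀ j, f ⟨p j, hpT j⟩ = q j := fun j => hp.extend_apply q id j
  let s : Finset T := Finset.univ.image fun j => (⟨p j, hpT j⟩ : T)
  obtain ⟨e, he⟩ := Finset.exists_equiv_extend_of_card_eq (t := T) (s := s) (f := f)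
    (by simp) (by
      intro b hb
      simp only [s, Finset.mem_image, Finset.mem_univ, true_and] at hb
      obtain ⟨_, ⟨j, rfl⟩, rfl⟩ := hb
      rw [hf]; exact hqT j) (by
      intro x hx y hy hxy
      simp only [s, Finset.coe_image, Finset.coe_univ, Set.image_univ, Set.mem_range] at hx hy
      obtain ⟨i, rfl⟩ := hx
      obtain ⟨j, rfl⟩ := hy
      rw [hf, hf] at hxy
      rw [hq hxy])
  let σ : Equiv.Perm ℕ := Equiv.Perm.ofSubtype (p := fun a => a ∈ T) e
  refine ⟨⟨(fun a => σ a : ℕ → ℕ), ?_, σ.bijective⟩, fun j => ?_⟩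
  · refine T.finite_toSet.subset fun a ha => ?_
    by_contra h
    exact ha (Equiv.Perm.ofSubtype_apply_of_not_mem (p := fun a => a ∈ T) e h)
  · have h1 : σ (p j) = e ⟨p j, hpT j⟩ :=
      Equiv.Perm.ofSubtype_apply_of_mem (p := fun a => a ∈ T) e (hpT j)
    have h2 := he ⟨p j, hpT j⟩ (by simp [s])
    exact h1.trans (h2.trans (hf j))

theorem Supports.mono {M : Submonoid (Function.End ℕ)} {X : Type*} [MulAction M X]
    {C D : Set ℕ} {x : X} (h : Supports M C x) (hCD : C ⊆ D) : Supports M D x :=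
  fun m₁ m₂ hag => h m₁ m₂ fun a ha => hag a (hCD ha)

theorem Supports.perm {X : Type*} [MulAction Sb X] {C : Set ℕ} {x : X}
    (h : Supports Sb C x) : Supports Pm C x :=
  fun g₁ g₂ hag => h (incl g₁) (incl g₂) hag

theorem Supports.sb_smul {X : Type*} [MulAction Sb X] {a : ℕ} {x : X}
    (h : Supports Sb {a} x) (m : Sb) : Supports Sb {m.1 a} (m • x) := by
  intro m₁ m₂ hag
  rw [← mul_smul, ← mul_smul]
  exact h (m₁ * m) (m₂ * m) fun b hb => by
    rw [Set.mem_singleton_iff.1 hb]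
    exact hag (m.1 a) rfl

/-- A finite `Perm`-support and a finite `Sb`-support of the same element intersect in an
`Sb`-support. -/
theorem Supports.inter {X : Type*} [MulAction Sb X] {C D : Set ℕ} {x : X}
    (hC : C.Finite) (hD : D.Finite) (hCx : Supports Pm C x) (hDx : Supports Sb D x) :
    Supports Sb (C ∩ D) x := by
  classical
  intro m₁ m₂ hag
  obtain ⟨N, hN⟩ := (hC.union hD).bddAbove
  have hlt : ∀ a, a ∈ C ∨ a ∈ D → a < N + 1 := fun a ha => Nat.lt_succ_of_le (hN ha)
  have : Finite ↑(C ∪ D) := hC.union hD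
  -- `g` fixes `C` and moves `D \ C` to fresh atoms.
  obtain ⟨g, hg⟩ := exists_perm_extending (ι := ↑(C ∪ D)) (fun a => a.1)
    (fun a => if a.1 ∈ C then a.1 else a.1 + (N + 1)) Subtype.val_injective (by
      rintro ⟨a, ha⟩ ⟨b, hb⟩ hab
      have h1 := hlt a ha
      have h2 := hlt b hb
      apply Subtype.ext
      simp only at hab ⊢
      split_ifs at hab <;> omega)
  have hgx : incl g • x = x := by
    have : g • x = (1 : Pm) • x := hCx g 1 fun a ha => by
      have := hg ⟨a, Or.inl ha⟩
      rw [this]; simp only [ha, if_true]; rfl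
    rw [one_smul] at this
    exact this
  -- `n` acts as `m₁` on `D` and as `m₂ ∘ g⁻¹` on `g(D)`; these agree on the overlap `C ∩ D`.
  let F : Finset ℕ := hD.toFinset
  let n : Sb := Sb.ofFinset (F ∪ F.image (· + (N + 1)))
    (fun a => if a ∈ D then m₁.1 a else m₂.1 (a - (N + 1)))
  have h1 : m₁ • x = n • x := hDx _ _ fun a ha => by
    simp [n, Sb.ofFinset_apply, F, ha]
  have h2 : (n * incl g) • x = m₂ • x := hDx _ _ fun a ha => by
    have hga := hg ⟨a, Or.inr ha⟩
    change n.1 (g.1 a) = m₂.1 a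
    rw [hga]
    by_cases hc : a ∈ C
    · simp [n, Sb.ofFinset_apply, F, ha, hc, hag a ⟨hc, ha⟩]
    · have hfresh : a + (N + 1) ∉ D := fun h => by
        have := hlt _ (Or.inr h)
        omega
      simp [n, Sb.ofFinset_apply, F, ha, hc, hfresh]
  rw [h1, ← h2, mul_smul, hgx]

/-! ### Letters with at most one atom -/

section Letters

-- `c` picks for each letter an atom supporting it; for a letter with empty support this atom is
-- arbitrary, and `¬ Supports Sb ∅ x` says that `c x` is genuinely the atom of `x`.
variable {A : Type*} [MulAction Sb A] {c : A → ℕ}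

theorem smul_eq_self_of_supports_empty {x : A} (h : Supports Sb ∅ x) (m : Sb) : m • x = x := by
  have := h m 1 (by simp)
  rwa [one_smul] at this

theorem smul_eq_smul_of_letter (hc : ∀ x, Supports Sb {c x} x) {x : A} {m n : Sb}
    (h : ¬ Supports Sb ∅ x → m.1 (c x) = n.1 (c x)) : m • x = n • x := by
  by_cases hx : Supports Sb ∅ x
  · rw [smul_eq_self_of_supports_empty hx, smul_eq_self_of_supports_empty hx]
  · exact hc x _ _ fun a ha => by rw [Set.mem_singleton_iff.1 ha]; exact h hx

/-- The atom of a letter lies in each of its finite `Perm`-supports. -/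
theorem atom_mem (hc : ∀ x, Supports Sb {c x} x) {x : A} (hx : ¬ Supports Sb ∅ x)
    {C : Set ℕ} (hC : C.Finite) (h : Supports Pm C x) : c x ∈ C := by
  by_contra hmem
  refine hx ((Supports.inter hC (Set.finite_singleton _) h (hc x)).mono ?_)
  rintro a ⟨ha, rfl⟩
  exact hmem ha

theorem atom_ne_of_separated (hc : ∀ x, Supports Sb {c x} x) {x y : A}
    (hx : ¬ Supports Sb ∅ x) (hy : ¬ Supports Sb ∅ y) (h : Separated x y) : c x ≠ c y := by
  obtain ⟨C, D, hC, hD, hCx, hDy, hdis⟩ := h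
  intro heq
  exact Set.disjoint_left.1 hdis (atom_mem hc hx hC hCx) (heq ▸ atom_mem hc hy hD hDy)

/-- On the letters whose only possible atom is `a`, the substitution `m` acts as a permutation
sending `a` to `m a`, hence has a left inverse `n`. -/
theorem exists_leftInverse_letter (hc : ∀ x, Supports Sb {c x} x) (m : Sb) (a : ℕ) :
    ∃ n : Sb, ∀ x, (¬ Supports Sb ∅ x → c x = a) → n • m • x = x := by
  obtain ⟨g, hg⟩ := exists_perm_extending (ι := Unit) (fun _ => m.1 a) (fun _ => a)
    (fun _ _ _ => rfl) (fun _ _ _ => rfl)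
  refine ⟨incl g, fun x hx => ?_⟩
  have h : (incl g * m) • x = (1 : Sb) • x := smul_eq_smul_of_letter hc fun hx' => by
    rw [hx hx']
    exact hg ()
  rwa [mul_smul, one_smul] at h

theorem supports_empty_smul_iff (hc : ∀ x, Supports Sb {c x} x) (m : Sb) (x : A) :
    Supports Sb ∅ (m • x) ↔ Supports Sb ∅ x := by
  constructor
  · intro h
    obtain ⟨n, hn⟩ := exists_leftInverse_letter hc m (c x)
    have h1 := hn x fun _ => rfl
    rw [smul_eq_self_of_supports_empty h] at h1
    rwa [h1] at h
  · intro h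
    rwa [smul_eq_self_of_supports_empty h]

theorem atom_smul (hc : ∀ x, Supports Sb {c x} x) (m : Sb) {x : A} (hx : ¬ Supports Sb ∅ x) :
    c (m • x) = m.1 (c x) := by
  have h := (hc x).sb_smul m
  exact atom_mem hc (fun h' => hx ((supports_empty_smul_iff hc m x).1 h'))
    (Set.finite_singleton _) h.perm

/-- Letters `x`, `y` with `m • x = m' • y` differ by any substitution matching up their atoms. -/
theorem smul_eq_of_letter (hc : ∀ x, Supports Sb {c x} x) {m m' : Sb} {x y : A}
    (h : m • x = m' • y) (g : Sb) (hg : ¬ Supports Sb ∅ x → g.1 (c x) = c y) : g • x = y := by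
  have hiff : Supports Sb ∅ x ↔ Supports Sb ∅ y := by
    rw [← supports_empty_smul_iff hc m x, h, supports_empty_smul_iff hc m' y]
  obtain ⟨n, hn⟩ := exists_leftInverse_letter hc m' (c y)
  rw [← hn y fun _ => rfl, ← hn (g • x), ← h, ← mul_smul m' g]
  · congr 1
    refine smul_eq_smul_of_letter hc fun hx => ?_
    have h1 := atom_smul hc m hx
    rw [h, atom_smul hc m' (fun hy => hx (hiff.2 hy)), ← hg hx] at h1
    exact h1
  · intro hx
    have hx' : ¬ Supports Sb ∅ x := fun h' => hx ((supports_empty_smul_iff hc g x).2 h')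
    rw [atom_smul hc g hx', hg hx']

/-! ### Separated words -/

/-- Every word is a substitution instance of a separated word: the `i`-th letter is renamed to
have `i` as its atom. -/
theorem exists_sepW_smul_eq (hc : ∀ x, Supports Sb {c x} x) (w : List A) :
    ∃ (bs : SepW A) (m : Sb), m • bs.1 = w := by
  let b : Fin w.length → A := fun i => Sb.ofFinset {c (w.get i)} (fun _ => i) • w.get i
  have hb : ∀ i : Fin w.length, Supports Sb {(i : ℕ)} (b i) := fun i => by
    have h := (hc (w.get i)).sb_smul (Sb.ofFinset {c (w.get i)} (fun _ => i))
    rw [Sb.ofFinset_apply, if_pos (by simp)] at h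
    exact h
  let m : Sb := Sb.ofFinset (Finset.range w.length)
    fun i => if h : i < w.length then c (w.get ⟨i, h⟩) else i
  refine ⟨⟨List.ofFn b, ?_⟩, m, ?_⟩
  · rw [List.pairwise_ofFn]
    intro i j hij
    refine ⟨{(i : ℕ)}, {(j : ℕ)}, Set.finite_singleton _, Set.finite_singleton _,
      (hb i).perm, (hb j).perm, ?_⟩
    rw [Set.disjoint_singleton]
    exact fun h => hij.ne (Fin.ext h)
  · change (List.ofFn b).map (m • ·) = w
    rw [List.map_ofFn]
    conv_rhs => rw [← List.ofFn_get w]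
    congr 1
    funext i
    change m • b i = w.get i
    have h : (m * Sb.ofFinset {c (w.get i)} (fun _ => i)) • w.get i = (1 : Sb) • w.get i :=
      smul_eq_smul_of_letter hc fun _ => by
        change m.1 ((Sb.ofFinset {c (w.get i)} (fun _ => i)).1 (c (w.get i))) = c (w.get i)
        rw [Sb.ofFinset_apply {c (w.get i)}, if_pos (by simp), Sb.ofFinset_apply,
          if_pos (by simp), dif_pos i.2]
    rwa [mul_smul, one_smul] at h

variable {O : Type*} [MulAction Sb O]

/-- The atoms of a separated word support its value under a `Perm`-equivariant map. -/
theorem supports_apply (hc : ∀ x, Supports Sb {c x} x) (hO : IsNominal Sb O)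
    {S : SepW A → O} (hS : Equivariant Pm S) (w : SepW A) :
    Supports Sb {a | ∃ x ∈ w.1, ¬ Supports Sb ∅ x ∧ c x = a} (S w) := by
  obtain ⟨D, hD, hDx⟩ := hO (S w)
  refine (Supports.inter ?_ hD ?_ hDx).mono Set.inter_subset_left
  · refine ((List.finite_toSet w.1).image c).subset ?_
    rintro _ ⟨x, hx, -, rfl⟩
    exact ⟨x, hx, rfl⟩
  · intro g₁ g₂ hag
    rw [← hS, ← hS]
    congr 1
    refine Subtype.ext (List.map_congr_left fun x hx => ?_)
    exact smul_eq_smul_of_letter (m := incl g₁) (n := incl g₂) hc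
      fun hx' => hag _ ⟨x, hx, hx', rfl⟩

/-- The element `m • S w` depends only on the word `m • w`. -/
theorem smul_eq_of_smul_eq (hc : ∀ x, Supports Sb {c x} x) (hO : IsNominal Sb O)
    {S : SepW A → O} (hS : Equivariant Pm S) {w w' : SepW A} {m m' : Sb}
    (h : m • w.1 = m' • w'.1) : m • S w = m' • S w' := by
  have hlen : w.1.length = w'.1.length := by
    simpa [List.smul_def] using congrArg List.length h
  have hget : ∀ i (hi : i < w.1.length), m • w.1[i] = m' • w'.1[i] := fun i hi => by
    have := List.getElem_of_eq h (i := i) (by simpa [List.smul_def] using hi)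
    simpa [List.smul_def] using this
  have hiff : ∀ i (hi : i < w.1.length), Supports Sb ∅ w.1[i] ↔ Supports Sb ∅ w'.1[i] :=
    fun i hi => by
      rw [← supports_empty_smul_iff hc m, hget i hi, supports_empty_smul_iff hc m']
  have hinj : ∀ (v : SepW A) (i j : ℕ) (hi : i < v.1.length) (hj : j < v.1.length),
      ¬ Supports Sb ∅ v.1[i] → ¬ Supports Sb ∅ v.1[j] → c v.1[i] = c v.1[j] → i = j := by
    intro v i j hi hj hi' hj' heq
    have hp := List.pairwise_iff_getElem.1 v.2
    rcases lt_trichotomy i j with hij | hij | hij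
    · exact absurd heq (atom_ne_of_separated hc hi' hj' (hp i j hi hj hij))
    · exact hij
    · exact absurd heq.symm (atom_ne_of_separated hc hj' hi' (hp j i hj hi hij))
  obtain ⟨g, hg⟩ := exists_perm_extending
    (ι := {i : Fin w.1.length // ¬ Supports Sb ∅ w.1[i.1]})
    (fun i => c w.1[i.1.1]) (fun i => c (w'.1[i.1.1]'(i.1.2.trans_eq hlen)))
    (fun i j hij => Subtype.ext (Fin.ext (hinj w _ _ _ _ i.2 j.2 hij)))
    (fun i j hij => Subtype.ext (Fin.ext (hinj w' _ _ _ _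
      (fun h' => i.2 ((hiff _ _).2 h')) (fun h' => j.2 ((hiff _ _).2 h')) hij)))
  have hgw : g • w = w' := by
    refine Subtype.ext ?_
    change w.1.map (g • ·) = w'.1
    refine List.ext_getElem (by simpa using hlen) fun i hi hi' => ?_
    rw [List.getElem_map]
    rw [List.length_map] at hi
    exact smul_eq_of_letter hc (hget i hi) (incl g) fun hx => hg ⟨⟨i, hi⟩, hx⟩
  have hSg : S (g • w) = incl g • S w := hS g w
  rw [← hgw, hSg, ← mul_smul]
  refine supports_apply hc hO hS w _ _ ?_
  rintro _ ⟨x, hx, hx', rfl⟩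
  obtain ⟨i, hi, rfl⟩ := List.getElem_of_mem hx
  change m.1 _ = m'.1 (g.1 _)
  have hgi := hg ⟨⟨i, hi⟩, hx'⟩
  simp only at hgi
  rw [hgi, ← atom_smul hc m hx', hget i hi, atom_smul hc m' fun h' => hx' ((hiff i hi).2 h')]

end Letters

/-- Let `Σ = A` and `O` be nominal `Sb`-sets with `dim(A) ≤ 1`.
Restriction to separated words is a one-to-one correspondence between `Sb`-equivariant
languages `L : A* → O` and `Perm`-equivariant separated languages `S : (UA)^(∗) → U(O)`;
moreover the inverse is computed by the explicit renaming formula: if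
`bs = b₁…bₙ` is a separated word, pairwise separated and separated from `w = a₁…aₙ`,
and `m ∈ Sb` maps each `bᵢ` to `aᵢ` (and is the identity elsewhere), then
`L (a₁…aₙ) = m • L (b₁…bₙ)`. -/
theorem restriction_correspondence_sb_languages {A O : Type*}
    [MulAction Sb A] [MulAction Sb O]
    (hA : IsNominal Sb A) (hO : IsNominal Sb O)
    (hdim : ∀ a : A, ∃ C : Set ℕ, C.Subsingleton ∧ Supports Sb C a) :
    -- restriction is injective on `Sb`-equivariant languages …
    (∀ L L' : List A → O, Equivariant Sb L → Equivariant Sb L' →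
      (∀ w : List A, w.Pairwise Separated → L w = L' w) → L = L') ∧
    -- … and every `Perm`-equivariant separated language is such a restriction
    (∀ S : SepW A → O, Equivariant Pm S →
      ∃ L : List A → O, Equivariant Sb L ∧ ∀ w : SepW A, L w.1 = S w) ∧
    -- the explicit inverse formula
    (∀ L : List A → O, Equivariant Sb L →
      ∀ (w bs : List A) (m : Sb),
        bs.Pairwise Separated →
        (∀ b ∈ bs, Separated b w) →
        (hlen : bs.length = w.length) →
        (∀ (i : ℕ) (hi : i < w.length) (hib : i < bs.length),
          m • bs.get ⟨i, hib⟩ = w.get ⟨i, hi⟩) →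
        L w = m • L bs) := by
  have hatom : ∀ x : A, ∃ a : ℕ, Supports Sb {a} x := fun x => by
    obtain ⟨C, hC, hx⟩ := hdim x
    rcases hC.eq_empty_or_singleton with rfl | ⟨a, rfl⟩
    · exact ⟨0, hx.mono (Set.empty_subset _)⟩
    · exact ⟨a, hx⟩
  choose c hc using hatom
  refine ⟨fun L L' hL hL' h => ?_, fun S hS => ?_, ?_⟩
  · funext w
    obtain ⟨bs, m, rfl⟩ := exists_sepW_smul_eq hc w
    rw [hL, hL', h _ bs.2]
  · choose bs m hbs using exists_sepW_smul_eq hc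
    refine ⟨fun w => m w • S (bs w), fun n w => ?_, fun w => ?_⟩
    · change m (n • w) • S (bs (n • w)) = n • m w • S (bs w)
      rw [← mul_smul]
      refine smul_eq_of_smul_eq hc hO hS ?_
      rw [hbs, mul_smul, hbs]
    · rw [← one_smul Sb (S w)]
      refine smul_eq_of_smul_eq hc hO hS ?_
      rw [hbs, one_smul]
  · intro L hL w bs m _ _ hlen h
    rw [← hL]
    congr 1
    refine List.ext_getElem (by simp [List.smul_def, hlen]) fun i hi hi' => ?_
    have := h i hi (hlen ▸ hi)
    simpa [List.smul_def] using this.symm
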